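/- Let n : (0,ε₀) → ℕ satisfy n(ε)/log(1/ε) → ∞ as ε↓0, let a : (0,ε₀) → (0,∞) satisfy a(ε) → ∞ as ε↓0, and set m(ε) = ⌊min(n(ε)/2, a(ε)·log(1/ε))⌋. Suppose each P_k(ε), 1 ≤ k ≤ n(ε), is stochastic, P̃ is an irreducible and aperiodic stochastic matrix with stationary distribution π̃, and there are matrices P̃⁽¹⁾, P̃⁽²⁾ with sup_{0 ≤ k ≤ m(ε)} ‖P_{n(ε)−k}(ε) − (P̃ − ε k P̃⁽¹⁾ + (ε²/2) k² P̃⁽²⁾)‖ = O(ε³ m(ε)³) as ε↓0. Then, writing Z = (I − P̃ + Π̃)^{−1}, for every probability row vector μ and column vector r: μ P_1(ε)⋯P_{n(ε)}(ε) r = π̃ r − ε π̃ P̃⁽¹⁾ Z² P̃ r + ε² π̃ P̃⁽¹⁾ Z² P̃⁽¹⁾ Z² P̃ r + ε² ((1/2) π̃ P̃⁽²⁾ + π̃ P̃⁽¹⁾ Z P̃⁽¹⁾) [2Z³ − Z²] P̃ r + O(ε³ m(ε)⁴) as ε↓0. -/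

import Mathlib

open Matrix Topology Filter

/-- The matrix norm ‖A‖ = max_x Σ_y |A(x,y)|. -/
noncomputable def matNorm {T : Type*} [Fintype T] (A : Matrix T T ℝ) : ℝ :=
  ⨆ x, ∑ y, |A x y|

/-- A square matrix is stochastic if all entries are nonnegative and every row sums to 1. -/
def IsStochastic {T : Type*} [Fintype T] (P : Matrix T T ℝ) : Prop :=
  (∀ x y, 0 ≤ P x y) ∧ ∀ x, ∑ y, P x y = 1

/-- The ordered product P 1 * P 2 * ⋯ * P j. -/
noncomputable def prodP {T : Type*} [Fintype T] [DecidableEq T]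
    (P : ℕ → Matrix T T ℝ) (j : ℕ) : Matrix T T ℝ :=
  ((List.range j).map fun i => P (i + 1)).prod

/-- m(ε) = ⌊min(n(ε)/2, a(ε)·log(1/ε))⌋. -/
noncomputable def mcut (n : ℝ → ℕ) (a : ℝ → ℝ) (ε : ℝ) : ℕ :=
  ⌊min ((n ε : ℝ) / 2) (a ε * Real.log (1/ε))⌋₊

/-
Count steps from the end and write `s = ε k` for slow time. A polynomial `Ψ(s, ε)` of degree
two approximates `P_1 ⋯ P_{n-k-1}` if `Ψ(s, ε) (P̃ - s P̃⁽¹⁾ + (s²/2) P̃⁽²⁾) = Ψ(s - ε, ε)` up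
to cubic terms; comparing terms of equal degree, the fundamental matrix `Z` solves for its
coefficients. Stochastic matrices fix the matrix `Π̃` with rows `π̃`, so the deviation `D` of
the true product from `Ψ` satisfies `D Π̃ = 0`. On this space right multiplication by matrices
near `P̃` contracts a suitable norm; hence the cubic errors of the last `m` steps add up only
to `O((ε m)³)`, while the initial deviation is damped to `O(ε³)`. The product of all `n`
matrices is thereby compared with `Ψ(-ε, ε)`, and the recursion at `s = 0` turns this into
`Ψ(0, ε) P̃`, the asserted expansion. All this uses `P̃⁽¹⁾ Π̃ = P̃⁽²⁾ Π̃ = 0`; if that fails,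
the row sums keep `ε m` away from zero and the error term is no longer small.
-/

open Asymptotics
open scoped Matrix.Norms.Operator

section Algebra

variable {R : Type*} [Ring R]

/-- The algebraic properties of the fundamental matrix `Z = (I - P + E)⁻¹` of a chain with
transition operator `P` and stationary projection `E`: on `{X | X * E = 0}`, right multiplication by
`Z` inverts right multiplication by `1 - P`. -/
structure IsFundamental (P E Z : R) : Prop where
  proj_mul : E * P = E
  mul_proj : Z * E = E
  mul_one_sub : Z * (1 - P) = 1 - E

namespace IsFundamental

variable {P E Z X : R}

theorem annihilates (h : IsFundamental P E Z) (hX : X * E = 0) : X * Z * E = 0 := by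
  rw [mul_assoc, h.mul_proj, hX]

theorem mul_mul (h : IsFundamental P E Z) (hX : X * E = 0) : X * Z * P = X * Z - X := by
  have hsolve : X * Z * (1 - P) = X := by
    rw [mul_assoc, h.mul_one_sub, mul_sub, hX, mul_one, sub_zero]
  rw [eq_sub_iff_add_eq', ← eq_sub_iff_add_eq]
  simpa only [mul_sub, mul_one] using hsolve.symm

end IsFundamental

variable [Algebra ℝ R]

/-- The second-order Taylor model, at slow time `s = ε k`, of the `k`-th transition operator counted
from the end. -/
noncomputable def taylorTwo (P P₁ P₂ : R) (s : ℝ) : R :=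
  P - s • P₁ + (s ^ 2 / 2) • P₂

/-- The row source `½ π P⁽²⁾ + π P⁽¹⁾ Z P⁽¹⁾` of the second-order corrector, with `E` in place of
the row vector `π`. -/
noncomputable def secondSource (E P₁ P₂ Z : R) : R :=
  (1 / 2 : ℝ) • (E * P₂) + E * (P₁ * Z * P₁)

/-- The part of `terminalApprox` that is homogeneous of degree one in `(s, ε)`. -/
noncomputable def firstCorrector (E P₁ Z : R) (s ε : ℝ) : R :=
  -(s • (E * P₁ * Z) + ε • (E * P₁ * Z ^ 2))

/-- The part of `terminalApprox` that is homogeneous of degree two in `(s, ε)`. -/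
noncomputable def secondCorrector (E P₁ P₂ Z : R) (s ε : ℝ) : R :=
  s ^ 2 • (secondSource E P₁ P₂ Z * Z) +
    (s * ε) • ((2 : ℝ) • (secondSource E P₁ P₂ Z * Z ^ 2) + E * P₁ * Z ^ 2 * P₁ * Z) +
    ε ^ 2 • (secondSource E P₁ P₂ Z * ((2 : ℝ) • Z ^ 3 - Z ^ 2) +
      E * P₁ * Z ^ 2 * P₁ * Z ^ 2)

/-- The second-order approximation of the product `P_1 ⋯ P_{n-k-1}`, at slow time `s = ε k`. -/
noncomputable def terminalApprox (E P₁ P₂ Z : R) (s ε : ℝ) : R :=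
  E + firstCorrector E P₁ Z s ε + secondCorrector E P₁ P₂ Z s ε

/-- The second-order expansion of the complete product `P_1 ⋯ P_n`: the approximation of
`P_1 ⋯ P_{n-1}` followed by one step of `P`. -/
noncomputable def terminalExpansion (E P P₁ P₂ Z : R) (ε : ℝ) : R :=
  terminalApprox E P₁ P₂ Z 0 ε * P

variable {P E P₁ P₂ Z : R}

theorem secondSource_mul_proj (h₁ : P₁ * E = 0) (h₂ : P₂ * E = 0) :
    secondSource E P₁ P₂ Z * E = 0 := by
  simp only [secondSource, add_mul, smul_mul_assoc, mul_assoc, h₁, h₂, mul_zero, smul_zero,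
    add_zero]

theorem firstCorrector_mul_proj (hZ : IsFundamental P E Z) (h₁ : P₁ * E = 0) (s ε : ℝ) :
    firstCorrector E P₁ Z s ε * E = 0 := by
  simp only [firstCorrector, neg_mul, add_mul, smul_mul_assoc, pow_two, mul_assoc, hZ.mul_proj, h₁,
    mul_zero, smul_zero, add_zero, neg_zero]

theorem secondCorrector_mul_proj (hZ : IsFundamental P E Z) (h₁ : P₁ * E = 0) (h₂ : P₂ * E = 0)
    (s ε : ℝ) : secondCorrector E P₁ P₂ Z s ε * E = 0 := by
  simp only [secondCorrector, add_mul, sub_mul, smul_mul_assoc, pow_succ, pow_zero, one_mul,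
    mul_assoc, hZ.mul_proj, h₁, secondSource_mul_proj h₁ h₂, mul_zero, smul_zero, add_zero, mul_sub,
    mul_smul_comm, sub_zero]

theorem terminalApprox_mul_proj (hE : E * E = E) (hZ : IsFundamental P E Z) (h₁ : P₁ * E = 0)
    (h₂ : P₂ * E = 0) (s ε : ℝ) : terminalApprox E P₁ P₂ Z s ε * E = E := by
  rw [terminalApprox, add_mul, add_mul, hE, firstCorrector_mul_proj hZ h₁,
    secondCorrector_mul_proj hZ h₁ h₂, add_zero, add_zero]

theorem firstCorrector_step (hZ : IsFundamental P E Z) (h₁ : P₁ * E = 0) (s ε : ℝ) :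
    firstCorrector E P₁ Z s ε * P - s • (E * P₁) = firstCorrector E P₁ Z (s - ε) ε := by
  have hX : E * P₁ * E = 0 := by rw [mul_assoc, h₁, mul_zero]
  have hXZ := hZ.mul_mul (hZ.annihilates hX)
  simp only [firstCorrector, pow_two, neg_mul, add_mul, smul_mul_assoc, ← mul_assoc,
    hZ.mul_mul hX, hXZ]
  module

theorem secondCorrector_step (hZ : IsFundamental P E Z) (h₁ : P₁ * E = 0) (h₂ : P₂ * E = 0)
    (s ε : ℝ) :
    secondCorrector E P₁ P₂ Z s ε * P - s • (firstCorrector E P₁ Z s ε * P₁)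
        + (s ^ 2 / 2) • (E * P₂)
      = secondCorrector E P₁ P₂ Z (s - ε) ε := by
  have hθ := secondSource_mul_proj (Z := Z) h₁ h₂
  have hθZ := hZ.annihilates hθ
  have hY : E * P₁ * Z * Z * P₁ * E = 0 := by rw [mul_assoc, h₁, mul_zero]
  have hθP := hZ.mul_mul hθ
  have hθZP := hZ.mul_mul hθZ
  have hθZZP := hZ.mul_mul (hZ.annihilates hθZ)
  have hYP := hZ.mul_mul hY
  have hYZP := hZ.mul_mul (hZ.annihilates hY)
  have hsource : E * P₁ * Z * P₁ = secondSource E P₁ P₂ Z - (1 / 2 : ℝ) • (E * P₂) := by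
    simp only [secondSource, add_sub_cancel_left, mul_assoc]
  simp only [secondCorrector, firstCorrector, pow_succ, pow_zero, one_mul, neg_mul, add_mul,
    smul_mul_assoc, mul_sub, sub_mul, mul_smul_comm, ← mul_assoc, hθP, hθZP, hθZZP, hYP, hYZP,
    hsource]
  module

theorem terminalApprox_mul_taylorTwo_sub (hZ : IsFundamental P E Z) (h₁ : P₁ * E = 0)
    (h₂ : P₂ * E = 0) (s ε : ℝ) :
    terminalApprox E P₁ P₂ Z s ε * taylorTwo P P₁ P₂ s - terminalApprox E P₁ P₂ Z (s - ε) ε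
      = (s ^ 2 / 2) • (firstCorrector E P₁ Z s ε * P₂) - s • (secondCorrector E P₁ P₂ Z s ε * P₁)
        + (s ^ 2 / 2) • (secondCorrector E P₁ P₂ Z s ε * P₂) := by
  simp only [terminalApprox, taylorTwo, add_mul, mul_add, mul_sub, mul_smul_comm, hZ.proj_mul,
    ← firstCorrector_step hZ h₁, ← secondCorrector_step hZ h₁ h₂]
  module

theorem terminalExpansion_eq (hZ : IsFundamental P E Z) (h₁ : P₁ * E = 0) (h₂ : P₂ * E = 0)
    (ε : ℝ) : terminalExpansion E P P₁ P₂ Z ε = terminalApprox E P₁ P₂ Z (-ε) ε := by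
  have h := terminalApprox_mul_taylorTwo_sub hZ h₁ h₂ 0 ε
  simpa [terminalExpansion, taylorTwo, sub_eq_zero] using h

theorem terminalExpansion_eq_proj_mul (h : E * P = E) (ε : ℝ) :
    terminalExpansion E P P₁ P₂ Z ε
      = E * (P - ε • (P₁ * Z ^ 2 * P) + ε ^ 2 • (P₁ * Z ^ 2 * P₁ * Z ^ 2 * P)
          + ε ^ 2 • (((1 / 2 : ℝ) • P₂ + P₁ * Z * P₁) * (((2 : ℝ) • Z ^ 3 - Z ^ 2) * P))) := by
  simp only [terminalExpansion, terminalApprox, firstCorrector, secondCorrector, secondSource,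
    zero_smul, zero_mul, zero_add, zero_pow two_ne_zero, add_mul, mul_add, neg_mul, mul_sub,
    sub_mul, smul_mul_assoc, mul_smul_comm, mul_assoc, h]
  module

end Algebra

section Contraction

variable {R : Type*} [NormedRing R]

/-- `P` has `E` as its stationary projection, and its powers approach `E` in norm. -/
structure IsUniformlyErgodic (P E : R) : Prop where
  proj_mul : E * P = E
  mul_proj : P * E = E
  proj_mul_proj : E * E = E
  exists_norm_pow_sub_lt_one : ∃ N ≠ 0, ‖P ^ N - E‖ < 1

/-- The elements of norm at most one that fix `E` on the left; for `E` the matrix whose rows all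
equal a given distribution, these include the stochastic matrices. -/
def contractionsFixing [NormOneClass R] (E : R) : Submonoid R where
  carrier := {Q | ‖Q‖ ≤ 1 ∧ Q * E = E}
  one_mem' := ⟨norm_one.le, one_mul E⟩
  mul_mem' := fun {A B} hA hB =>
    ⟨(norm_mul_le A B).trans (mul_le_one₀ hA.1 (norm_nonneg B) hB.1), by
      rw [mul_assoc, hB.2, hA.2]⟩

/-- A norm on `{X | X * E = 0}`, equivalent to the given one, that right multiplication by `P`
contracts in a single step as soon as `P ^ N` contracts the given norm. -/
noncomputable def orbitNorm (P : R) (N : ℕ) (A : R) : ℝ :=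
  ∑ k ∈ Finset.range N, ‖A * P ^ k‖

variable {P E : R} {N : ℕ}

theorem norm_le_orbitNorm (hN : N ≠ 0) (A : R) : ‖A‖ ≤ orbitNorm P N A := by
  simpa only [orbitNorm, pow_zero, mul_one] using
    Finset.single_le_sum (f := fun k => ‖A * P ^ k‖) (fun _ _ => norm_nonneg _)
      (Finset.mem_range.2 (Nat.pos_of_ne_zero hN))

theorem orbitNorm_le (A : R) : orbitNorm P N A ≤ orbitNorm P N 1 * ‖A‖ := by
  rw [orbitNorm, orbitNorm, Finset.sum_mul]
  refine Finset.sum_le_sum fun k _ => ?_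
  rw [one_mul, mul_comm]
  exact norm_mul_le A (P ^ k)

theorem orbitNorm_add_le (A B : R) : orbitNorm P N (A + B) ≤ orbitNorm P N A + orbitNorm P N B := by
  simp only [orbitNorm, ← Finset.sum_add_distrib, add_mul]
  exact Finset.sum_le_sum fun _ _ => norm_add_le _ _

theorem orbitNorm_mul_self (A : R) :
    orbitNorm P N (A * P) = orbitNorm P N A + ‖A * P ^ N‖ - ‖A‖ := by
  have hshift : orbitNorm P N (A * P) = ∑ k ∈ Finset.range N, ‖A * P ^ (k + 1)‖ :=
    Finset.sum_congr rfl fun k _ => by rw [pow_succ', mul_assoc]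
  have hsucc := Finset.sum_range_succ (fun k => ‖A * P ^ k‖) N
  rw [Finset.sum_range_succ', pow_zero, mul_one, ← hshift] at hsucc
  rw [eq_sub_iff_add_eq, hsucc, orbitNorm]

theorem norm_mul_pow_le_of_mul_proj_eq_zero {A : R} (hA : A * E = 0) (N : ℕ) :
    ‖A * P ^ N‖ ≤ ‖P ^ N - E‖ * ‖A‖ := by
  calc ‖A * P ^ N‖ = ‖A * (P ^ N - E)‖ := by rw [mul_sub, hA, sub_zero]
    _ ≤ ‖P ^ N - E‖ * ‖A‖ := (norm_mul_le _ _).trans_eq (mul_comm _ _)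

theorem orbitNorm_mul_le [NormOneClass R] (hN : N ≠ 0) (hρ : ‖P ^ N - E‖ < 1) {A Q : R} {η : ℝ}
    (hA : A * E = 0) (hQ : ‖Q - P‖ ≤ η) :
    orbitNorm P N (A * Q)
      ≤ (1 - (1 - ‖P ^ N - E‖) / orbitNorm P N 1 + orbitNorm P N 1 * η) * orbitNorm P N A := by
  have hK : 0 < orbitNorm P N 1 :=
    zero_lt_one.trans_le (norm_one (α := R) ▸ norm_le_orbitNorm hN 1)
  have hlow : orbitNorm P N A / orbitNorm P N 1 ≤ ‖A‖ :=
    (div_le_iff₀' hK).2 (orbitNorm_le A)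
  have hstep : orbitNorm P N (A * P)
      ≤ orbitNorm P N A - (1 - ‖P ^ N - E‖) * (orbitNorm P N A / orbitNorm P N 1) := by
    have hgap := mul_le_mul_of_nonneg_left hlow (sub_nonneg.2 hρ.le)
    have hpow := norm_mul_pow_le_of_mul_proj_eq_zero (P := P) hA N
    rw [orbitNorm_mul_self]
    linarith
  have hpert : orbitNorm P N (A * (Q - P)) ≤ orbitNorm P N 1 * (orbitNorm P N A * η) := by
    refine (orbitNorm_le _).trans (mul_le_mul_of_nonneg_left ?_ hK.le)
    refine (norm_mul_le _ _).trans (mul_le_mul (norm_le_orbitNorm hN A) hQ (norm_nonneg _) ?_)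
    exact (norm_nonneg A).trans (norm_le_orbitNorm hN A)
  calc orbitNorm P N (A * Q) = orbitNorm P N (A * P + A * (Q - P)) := by
        rw [← mul_add, add_sub_cancel]
    _ ≤ orbitNorm P N A - (1 - ‖P ^ N - E‖) * (orbitNorm P N A / orbitNorm P N 1)
          + orbitNorm P N 1 * (orbitNorm P N A * η) :=
        (orbitNorm_add_le _ _).trans (add_le_add hstep hpert)
    _ = _ := by ring

theorem le_geometric_of_le_mul_add {x : ℕ → ℝ} {q b : ℝ} (hq₀ : 0 ≤ q) (hq₁ : q < 1)
    (hb : 0 ≤ b) {M : ℕ} (hx : ∀ j < M, x (j + 1) ≤ q * x j + b) :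
    x M ≤ q ^ M * x 0 + b / (1 - q) := by
  induction M with
  | zero => simpa using div_nonneg hb (sub_pos.2 hq₁).le
  | succ M ih =>
    have hq : 1 - q ≠ 0 := (sub_pos.2 hq₁).ne'
    calc x (M + 1) ≤ q * x M + b := hx M M.lt_succ_self
      _ ≤ q * (q ^ M * x 0 + b / (1 - q)) + b := by
          gcongr
          exact ih fun j hj => hx j (hj.trans M.lt_succ_self)
      _ = q ^ (M + 1) * x 0 + b / (1 - q) := by field_simp; ring

theorem exists_orbitNorm_mul_le [NormOneClass R] (hN : N ≠ 0) (hρ : ‖P ^ N - E‖ < 1) :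
    ∃ q η : ℝ, 0 < q ∧ q < 1 ∧ 0 < η ∧ ∀ A Q : R, A * E = 0 → ‖Q - P‖ ≤ η →
      orbitNorm P N (A * Q) ≤ q * orbitNorm P N A := by
  have hK : 1 ≤ orbitNorm P N 1 := norm_one (α := R) ▸ norm_le_orbitNorm hN 1
  have : 0 < 1 - ‖P ^ N - E‖ := sub_pos.2 hρ
  refine ⟨1 - (1 - ‖P ^ N - E‖) / (2 * orbitNorm P N 1),
    (1 - ‖P ^ N - E‖) / (2 * orbitNorm P N 1 ^ 2),
    sub_pos.2 ((div_lt_one (by positivity)).2 ?_), sub_lt_self _ (by positivity), by positivity,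
    fun A Q hA hQ => (orbitNorm_mul_le hN hρ hA hQ).trans_eq ?_⟩
  · linarith [norm_nonneg (P ^ N - E)]
  · field_simp
    ring

/-- Errors committed along a recursion with multipliers close to `P` do not accumulate. -/
theorem IsUniformlyErgodic.exists_norm_le_of_perturbed_recursion [NormOneClass R]
    (hP : IsUniformlyErgodic P E) :
    ∃ C q η : ℝ, 0 ≤ C ∧ 0 < q ∧ q < 1 ∧ 0 < η ∧ ∀ (D Q : ℕ → R) (b : ℝ) (M : ℕ), 0 ≤ b →
      (∀ j < M, D j * E = 0) → (∀ j < M, ‖Q j - P‖ ≤ η) →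
      (∀ j < M, ‖D (j + 1) - D j * Q j‖ ≤ b) → ‖D M‖ ≤ C * (q ^ M * ‖D 0‖ + b) := by
  obtain ⟨N, hN, hρ⟩ := hP.exists_norm_pow_sub_lt_one
  obtain ⟨q, η, hq₀, hq₁, hη, hcontract⟩ := exists_orbitNorm_mul_le hN hρ
  set K := orbitNorm P N 1
  have hK : 0 ≤ K := (norm_nonneg (1 : R)).trans (norm_le_orbitNorm hN 1)
  have hgap : 0 < 1 - q := sub_pos.2 hq₁
  refine ⟨K / (1 - q), q, η, div_nonneg hK hgap.le, hq₀, hq₁, hη, fun D Q b M hb hD hQ hstep => ?_⟩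
  have hx : ∀ j < M, orbitNorm P N (D (j + 1)) ≤ q * orbitNorm P N (D j) + K * b := by
    intro j hj
    calc orbitNorm P N (D (j + 1))
        = orbitNorm P N (D j * Q j + (D (j + 1) - D j * Q j)) := by rw [add_sub_cancel]
      _ ≤ orbitNorm P N (D j * Q j) + orbitNorm P N (D (j + 1) - D j * Q j) :=
          orbitNorm_add_le _ _
      _ ≤ q * orbitNorm P N (D j) + K * b :=
          add_le_add (hcontract _ _ (hD j hj) (hQ j hj))
            ((orbitNorm_le _).trans (mul_le_mul_of_nonneg_left (hstep j hj) hK))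
  calc ‖D M‖ ≤ orbitNorm P N (D M) := norm_le_orbitNorm hN _
    _ ≤ q ^ M * orbitNorm P N (D 0) + K * b / (1 - q) :=
        le_geometric_of_le_mul_add (x := fun j => orbitNorm P N (D j)) hq₀.le hq₁
          (mul_nonneg hK hb) hx
    _ ≤ q ^ M * (K / (1 - q) * ‖D 0‖) + K * b / (1 - q) := by
        gcongr
        refine (orbitNorm_le _).trans ?_
        gcongr
        exact le_div_self hK hgap (sub_le_self _ hq₀.le)
    _ = K / (1 - q) * (q ^ M * ‖D 0‖ + b) := by ring

end Contraction

section Bounds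

variable {R : Type*} [NormedRing R] [NormedAlgebra ℝ R] {E P P₁ P₂ Z : R}

theorem exists_norm_firstCorrector_le (E P₁ Z : R) :
    ∃ C : ℝ, 0 ≤ C ∧ ∀ s ε τ : ℝ, |s| ≤ τ → |ε| ≤ τ → ‖firstCorrector E P₁ Z s ε‖ ≤ C * τ := by
  refine ⟨‖E * P₁ * Z‖ + ‖E * P₁ * Z ^ 2‖, by positivity, fun s ε τ hs hε => ?_⟩
  rw [firstCorrector, norm_neg]
  refine (norm_add_le _ _).trans ?_
  rw [norm_smul, norm_smul, Real.norm_eq_abs, Real.norm_eq_abs, add_mul, mul_comm _ τ, mul_comm _ τ]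
  gcongr

theorem exists_norm_secondCorrector_le (E P₁ P₂ Z : R) :
    ∃ C : ℝ, 0 ≤ C ∧ ∀ s ε τ : ℝ, |s| ≤ τ → |ε| ≤ τ →
      ‖secondCorrector E P₁ P₂ Z s ε‖ ≤ C * τ ^ 2 := by
  have hquad : ∀ A B C : R, ∃ K : ℝ, 0 ≤ K ∧ ∀ s ε τ : ℝ, |s| ≤ τ → |ε| ≤ τ →
      ‖s ^ 2 • A + (s * ε) • B + ε ^ 2 • C‖ ≤ K * τ ^ 2 := by
    refine fun A B C => ⟨‖A‖ + ‖B‖ + ‖C‖, by positivity, fun s ε τ hs hε => ?_⟩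
    have hτ : 0 ≤ τ := (abs_nonneg s).trans hs
    refine (norm_add₃_le ..).trans ?_
    simp only [norm_smul, norm_pow, norm_mul, Real.norm_eq_abs]
    calc |s| ^ 2 * ‖A‖ + |s| * |ε| * ‖B‖ + |ε| ^ 2 * ‖C‖
        ≤ τ ^ 2 * ‖A‖ + τ * τ * ‖B‖ + τ ^ 2 * ‖C‖ := by gcongr
      _ = (‖A‖ + ‖B‖ + ‖C‖) * τ ^ 2 := by ring
  exact hquad _ _ _

theorem exists_norm_terminalApprox_le (E P₁ P₂ Z : R) :
    ∃ C : ℝ, 0 ≤ C ∧ ∀ s ε : ℝ, |s| ≤ 1 → |ε| ≤ 1 → ‖terminalApprox E P₁ P₂ Z s ε‖ ≤ C := by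
  obtain ⟨C₁, hC₁, hfirst⟩ := exists_norm_firstCorrector_le E P₁ Z
  obtain ⟨C₂, hC₂, hsecond⟩ := exists_norm_secondCorrector_le E P₁ P₂ Z
  refine ⟨‖E‖ + C₁ * 1 + C₂ * 1 ^ 2, by positivity, fun s ε hs hε => ?_⟩
  exact (norm_add₃_le ..).trans
    (add_le_add (add_le_add le_rfl (hfirst s ε 1 hs hε)) (hsecond s ε 1 hs hε))

theorem abs_sq_half_le {s τ : ℝ} (hs : |s| ≤ τ) : |s ^ 2 / 2| ≤ τ ^ 2 := by
  rw [abs_of_nonneg (by positivity)]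
  linarith [sq_le_sq.2 (hs.trans (le_abs_self τ)), sq_nonneg s]

theorem exists_norm_terminalApprox_mul_sub_le (hZ : IsFundamental P E Z) (h₁ : P₁ * E = 0)
    (h₂ : P₂ * E = 0) (c : ℝ) :
    ∃ C : ℝ, 0 ≤ C ∧ ∀ s ε τ : ℝ, |s| ≤ τ → |ε| ≤ τ → τ ≤ 1 → ∀ Q : R,
      ‖Q - taylorTwo P P₁ P₂ s‖ ≤ c * τ ^ 3 →
      ‖terminalApprox E P₁ P₂ Z s ε * Q - terminalApprox E P₁ P₂ Z (s - ε) ε‖ ≤ C * τ ^ 3 := by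
  obtain ⟨K, hK, happrox⟩ := exists_norm_terminalApprox_le E P₁ P₂ Z
  obtain ⟨C₁, hC₁, hfirst⟩ := exists_norm_firstCorrector_le E P₁ Z
  obtain ⟨C₂, hC₂, hsecond⟩ := exists_norm_secondCorrector_le E P₁ P₂ Z
  refine ⟨C₁ * ‖P₂‖ + C₂ * ‖P₁‖ + C₂ * ‖P₂‖ + K * |c|, by positivity,
    fun s ε τ hs hε hτ Q hQ => ?_⟩
  have hτ₀ : 0 ≤ τ := (abs_nonneg s).trans hs
  have hsq := abs_sq_half_le hs
  have hsmul : ∀ {a u v : ℝ} {X : R} (Y : R), |a| ≤ u → ‖X‖ ≤ v →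
      ‖a • (X * Y)‖ ≤ u * (v * ‖Y‖) := fun {a u v X} Y ha hX =>
    (norm_smul_le _ _).trans (mul_le_mul ha ((norm_mul_le _ _).trans (by gcongr))
      (norm_nonneg _) ((abs_nonneg a).trans ha))
  have hΨ := happrox s ε (hs.trans hτ) (hε.trans hτ)
  calc ‖terminalApprox E P₁ P₂ Z s ε * Q - terminalApprox E P₁ P₂ Z (s - ε) ε‖
      = ‖(s ^ 2 / 2) • (firstCorrector E P₁ Z s ε * P₂)
          - s • (secondCorrector E P₁ P₂ Z s ε * P₁)
          + (s ^ 2 / 2) • (secondCorrector E P₁ P₂ Z s ε * P₂)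
          + terminalApprox E P₁ P₂ Z s ε * (Q - taylorTwo P P₁ P₂ s)‖ := by
        rw [← terminalApprox_mul_taylorTwo_sub hZ h₁ h₂]
        noncomm_ring
    _ ≤ τ ^ 2 * (C₁ * τ * ‖P₂‖) + τ * (C₂ * τ ^ 2 * ‖P₁‖) + τ ^ 2 * (C₂ * τ ^ 2 * ‖P₂‖)
          + K * (c * τ ^ 3) := by
        refine (norm_add_le _ _).trans (add_le_add ((norm_add_le _ _).trans (add_le_add
          ((norm_sub_le _ _).trans (add_le_add ?_ ?_)) ?_)) ?_)
        · exact hsmul P₂ hsq (hfirst s ε τ hs hε)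
        · exact hsmul P₁ hs (hsecond s ε τ hs hε)
        · exact hsmul P₂ hsq (hsecond s ε τ hs hε)
        · exact (norm_mul_le _ _).trans (mul_le_mul hΨ hQ (norm_nonneg _) hK)
    _ ≤ τ ^ 2 * (C₁ * τ * ‖P₂‖) + τ * (C₂ * τ ^ 2 * ‖P₁‖) + τ ^ 2 * (C₂ * τ * ‖P₂‖)
          + K * (|c| * τ ^ 3) := by
        gcongr
        · exact pow_le_of_le_one hτ₀ hτ two_ne_zero
        · exact le_abs_self c
    _ = _ := by ring

theorem norm_sub_le_of_norm_sub_taylorTwo_le {Q : R} {c s τ : ℝ} (hs : |s| ≤ τ) (hτ : τ ≤ 1)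
    (hQ : ‖Q - taylorTwo P P₁ P₂ s‖ ≤ c * τ ^ 3) :
    ‖Q - P‖ ≤ (|c| + ‖P₁‖ + ‖P₂‖) * τ := by
  have hτ₀ : 0 ≤ τ := (abs_nonneg s).trans hs
  have hsq := abs_sq_half_le hs
  calc ‖Q - P‖ = ‖(Q - taylorTwo P P₁ P₂ s) - s • P₁ + (s ^ 2 / 2) • P₂‖ := by
        rw [taylorTwo]
        congr 1
        abel
    _ ≤ c * τ ^ 3 + τ * ‖P₁‖ + τ ^ 2 * ‖P₂‖ := by
        refine (norm_add_le _ _).trans (add_le_add ((norm_sub_le _ _).trans (add_le_add hQ ?_)) ?_)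
        · exact (norm_smul_le _ _).trans (by gcongr; exact hs)
        · exact (norm_smul_le _ _).trans (by gcongr; exact hsq)
    _ ≤ |c| * τ + τ * ‖P₁‖ + τ * ‖P₂‖ := by
        gcongr
        · exact le_abs_self c
        · exact pow_le_of_le_one hτ₀ hτ three_ne_zero
        · exact pow_le_of_le_one hτ₀ hτ two_ne_zero
    _ = (|c| + ‖P₁‖ + ‖P₂‖) * τ := by ring

end Bounds

section TerminalScheme

variable {R : Type*} [NormedRing R] [NormedAlgebra ℝ R] {E P P₁ P₂ Z : R} {c ε : ℝ} {m : ℕ}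
  {Q X : ℕ → R}

/-- The deviation of the partial product `X j` from its second-order approximation. -/
noncomputable def terminalDefect (E P₁ P₂ Z : R) (ε : ℝ) (m : ℕ) (X : ℕ → R) (j : ℕ) : R :=
  X j - terminalApprox E P₁ P₂ Z (ε * (m - j)) ε

theorem terminalDefect_last (hZ : IsFundamental P E Z) (h₁ : P₁ * E = 0) (h₂ : P₂ * E = 0) :
    terminalDefect E P₁ P₂ Z ε m X (m + 1) = X (m + 1) - terminalExpansion E P P₁ P₂ Z ε := by
  simp [terminalDefect, terminalExpansion_eq hZ h₁ h₂]

variable [NormOneClass R]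

/-- The last `m + 1` steps of a product of transition operators: `Q k` is the `k`-th operator
counted from the end, modelled at slow time `ε * k`, and `X j` is the product just before
`Q (m - j)` is applied, so that `X (m + 1)` is the complete product. -/
structure IsTerminalScheme (E P P₁ P₂ : R) (c ε : ℝ) (m : ℕ) (Q X : ℕ → R) : Prop where
  start_mem : X 0 ∈ contractionsFixing E
  mem : ∀ k ≤ m, Q k ∈ contractionsFixing E
  norm_sub_taylorTwo_le : ∀ k ≤ m, ‖Q k - taylorTwo P P₁ P₂ (ε * k)‖ ≤ c * (ε * m) ^ 3
  step : ∀ j ≤ m, X (j + 1) = X j * Q (m - j)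

theorem IsTerminalScheme.product_mem (h : IsTerminalScheme E P P₁ P₂ c ε m Q X) {j : ℕ}
    (hj : j ≤ m + 1) : X j ∈ contractionsFixing E := by
  induction j with
  | zero => exact h.start_mem
  | succ j ih =>
    rw [h.step j (by lia)]
    exact mul_mem (ih (by lia)) (h.mem _ (Nat.sub_le m j))

theorem IsTerminalScheme.defect_mul_proj (h : IsTerminalScheme E P P₁ P₂ c ε m Q X)
    (hE : E * E = E) (hZ : IsFundamental P E Z) (h₁ : P₁ * E = 0) (h₂ : P₂ * E = 0) {j : ℕ}
    (hj : j ≤ m + 1) : terminalDefect E P₁ P₂ Z ε m X j * E = 0 := by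
  rw [terminalDefect, sub_mul, (h.product_mem hj).2, terminalApprox_mul_proj hE hZ h₁ h₂, sub_self]

theorem IsTerminalScheme.defect_succ_sub (h : IsTerminalScheme E P P₁ P₂ c ε m Q X) {j : ℕ}
    (hj : j ≤ m) :
    terminalDefect E P₁ P₂ Z ε m X (j + 1) - terminalDefect E P₁ P₂ Z ε m X j * Q (m - j)
      = terminalApprox E P₁ P₂ Z (ε * ((m - j : ℕ) : ℝ)) ε * Q (m - j)
        - terminalApprox E P₁ P₂ Z (ε * ((m - j : ℕ) : ℝ) - ε) ε := by
  have hnext : ε * ((m : ℝ) - (j + 1)) = ε * (m - j) - ε := by ring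
  simp only [terminalDefect, h.step j hj, sub_mul, Nat.cast_succ, Nat.cast_sub hj, hnext]
  abel

theorem abs_mul_natCast_le (hε : 0 < ε) {k : ℕ} (hk : k ≤ m) : |ε * k| ≤ ε * m := by
  rw [abs_of_nonneg (by positivity)]
  gcongr

theorem IsTerminalScheme.exists_norm_defect_le (hP : IsUniformlyErgodic P E)
    (hZ : IsFundamental P E Z) (h₁ : P₁ * E = 0) (h₂ : P₂ * E = 0) (c : ℝ) :
    ∃ C q δ : ℝ, 0 ≤ C ∧ 0 < q ∧ q < 1 ∧ 0 < δ ∧ δ ≤ 1 ∧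
      ∀ {ε : ℝ} {m : ℕ} {Q X : ℕ → R}, 0 < ε → 1 ≤ m → ε * m ≤ δ →
        IsTerminalScheme E P P₁ P₂ c ε m Q X →
        ‖terminalDefect E P₁ P₂ Z ε m X (m + 1)‖
          ≤ C * (q ^ (m + 1) * ‖terminalDefect E P₁ P₂ Z ε m X 0‖ + (ε * m) ^ 3) := by
  obtain ⟨B, q, η, hB, hq₀, hq₁, hη, hrec⟩ := hP.exists_norm_le_of_perturbed_recursion
  obtain ⟨K, hK, hresidual⟩ := exists_norm_terminalApprox_mul_sub_le hZ h₁ h₂ c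
  refine ⟨B * (1 + K), q, min 1 (η / (|c| + ‖P₁‖ + ‖P₂‖ + 1)), by positivity, hq₀, hq₁,
    by positivity, min_le_left _ _, fun {ε m Q X} hε hm hτ h => ?_⟩
  have hτ₁ : ε * m ≤ 1 := hτ.trans (min_le_left _ _)
  have hτη : (|c| + ‖P₁‖ + ‖P₂‖) * (ε * m) ≤ η := by
    have hmul := (le_div_iff₀ (by positivity)).1 (hτ.trans (min_le_right _ _))
    linarith [mul_nonneg hε.le m.cast_nonneg]
  have hετ : |ε| ≤ ε * m := by simpa using abs_mul_natCast_le hε hm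
  have hslow : ∀ j, |ε * ((m - j : ℕ) : ℝ)| ≤ ε * m := fun j =>
    abs_mul_natCast_le hε (Nat.sub_le m j)
  have hbound := hrec (terminalDefect E P₁ P₂ Z ε m X) (fun j => Q (m - j)) (K * (ε * m) ^ 3)
    (m + 1) (by positivity) (fun j hj => h.defect_mul_proj hP.proj_mul_proj hZ h₁ h₂ hj.le)
    (fun j _ => (norm_sub_le_of_norm_sub_taylorTwo_le (hslow j) hτ₁
      (h.norm_sub_taylorTwo_le _ (Nat.sub_le m j))).trans hτη)
    (fun j hj => h.defect_succ_sub (Nat.lt_succ_iff.1 hj) ▸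
      hresidual _ ε _ (hslow j) hετ hτ₁ _ (h.norm_sub_taylorTwo_le _ (Nat.sub_le m j)))
  refine hbound.trans ?_
  rw [mul_assoc]
  gcongr
  rw [one_add_mul, mul_add]
  gcongr
  · exact le_add_of_nonneg_right (by positivity)
  · exact le_add_of_nonneg_left (by positivity)

theorem IsTerminalScheme.exists_norm_sub_terminalExpansion_le_of_mul_proj_eq_zero
    (hP : IsUniformlyErgodic P E) (hZ : IsFundamental P E Z) (h₁ : P₁ * E = 0) (h₂ : P₂ * E = 0)
    (c : ℝ) :
    ∃ C q δ : ℝ, 0 ≤ C ∧ 0 < q ∧ q < 1 ∧ 0 < δ ∧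
      ∀ {ε : ℝ} {m : ℕ} {Q X : ℕ → R}, 0 < ε → 1 ≤ m → ε * m ≤ δ →
        IsTerminalScheme E P P₁ P₂ c ε m Q X →
        ‖X (m + 1) - terminalExpansion E P P₁ P₂ Z ε‖ ≤ C * (q ^ m + (ε * m) ^ 3) := by
  obtain ⟨B, q, δ, hB, hq₀, hq₁, hδ₀, hδ₁, hdefect⟩ := exists_norm_defect_le hP hZ h₁ h₂ c
  obtain ⟨L, hL, hΨ⟩ := exists_norm_terminalApprox_le E P₁ P₂ Z
  refine ⟨B * (1 + L), q, δ, by positivity, hq₀, hq₁, hδ₀, fun {ε m Q X} hε hm hτ h => ?_⟩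
  have hτ₁ := hτ.trans hδ₁
  have hstart : ‖terminalDefect E P₁ P₂ Z ε m X 0‖ ≤ 1 + L := by
    refine (norm_sub_le _ _).trans (add_le_add h.start_mem.1 (hΨ _ ε ?_ ?_))
    · simpa using (abs_mul_natCast_le hε le_rfl).trans hτ₁
    · simpa using (abs_mul_natCast_le hε hm).trans hτ₁
  rw [← terminalDefect_last hZ h₁ h₂]
  calc ‖terminalDefect E P₁ P₂ Z ε m X (m + 1)‖
      ≤ B * (q ^ (m + 1) * ‖terminalDefect E P₁ P₂ Z ε m X 0‖ + (ε * m) ^ 3) :=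
        hdefect hε hm hτ h
    _ ≤ B * (q ^ m * (1 + L) + (1 + L) * (ε * m) ^ 3) := by
        gcongr ?_ * (?_ * ?_ + ?_)
        · exact pow_le_pow_of_le_one hq₀.le hq₁.le m.le_succ
        · exact le_mul_of_one_le_left (by positivity) (le_add_of_nonneg_right hL)
    _ = B * (1 + L) * (q ^ m + (ε * m) ^ 3) := by ring

theorem IsTerminalScheme.norm_mul_proj_sub_smul_le (h : IsTerminalScheme E P P₁ P₂ c ε m Q X)
    (hPE : P * E = E) (hτ : 0 < ε * m) :
    ‖P₁ * E - (ε * m) • ((1 / 2 : ℝ) • (P₂ * E))‖ ≤ c * ‖E‖ * (ε * m) ^ 2 := by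
  have hrow : (Q m - taylorTwo P P₁ P₂ (ε * m)) * E
      = (ε * m) • (P₁ * E - (ε * m) • ((1 / 2 : ℝ) • (P₂ * E))) := by
    rw [sub_mul, (h.mem m le_rfl).2, taylorTwo, add_mul, sub_mul, hPE, smul_mul_assoc,
      smul_mul_assoc]
    module
  have hle := (norm_mul_le _ _).trans
    (mul_le_mul_of_nonneg_right (h.norm_sub_taylorTwo_le m le_rfl) (norm_nonneg E))
  rw [hrow, norm_smul, Real.norm_of_nonneg hτ.le] at hle
  refine le_of_mul_le_mul_left (hle.trans_eq ?_) hτ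
  ring

/-- For `ε * m` bounded below the asserted error is of order one, so boundedness suffices. -/
theorem IsTerminalScheme.exists_norm_sub_terminalExpansion_le_of_le {δ : ℝ} (hδ : 0 < δ)
    (E P P₁ P₂ Z : R) (c : ℝ) :
    ∃ C : ℝ, 0 ≤ C ∧ ∀ {ε : ℝ} {m : ℕ} {Q X : ℕ → R}, 0 < ε → ε ≤ 1 → δ ≤ ε * m →
      IsTerminalScheme E P P₁ P₂ c ε m Q X →
      ‖X (m + 1) - terminalExpansion E P P₁ P₂ Z ε‖ ≤ C * (ε * m) ^ 3 := by
  obtain ⟨L, hL, hΨ⟩ := exists_norm_terminalApprox_le E P₁ P₂ Z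
  refine ⟨(1 + L * ‖P‖) / δ ^ 3, by positivity, fun {ε m Q X} hε₀ hε₁ hτ h => ?_⟩
  have hbound : ‖X (m + 1) - terminalExpansion E P P₁ P₂ Z ε‖ ≤ 1 + L * ‖P‖ := by
    refine (norm_sub_le _ _).trans
      (add_le_add (h.product_mem le_rfl).1 ((norm_mul_le _ _).trans ?_))
    gcongr
    exact hΨ 0 ε (by simp) (by rwa [abs_of_pos hε₀])
  rw [div_mul_eq_mul_div, le_div_iff₀ (by positivity)]
  gcongr

theorem eq_zero_of_frequently_norm_sub_smul_le {F : Type*} [NormedAddCommGroup F] [NormedSpace ℝ F]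
    {u v : F} {C : ℝ} (h : ∃ᶠ τ in 𝓝[>] (0 : ℝ), ‖u - τ • v‖ ≤ C * τ ^ 2) : u = 0 ∧ v = 0 := by
  have hlimit : ∀ {f g : ℝ → ℝ}, Continuous f → Continuous g → (∃ᶠ τ in 𝓝[>] 0, f τ ≤ g τ) →
      f 0 ≤ g 0 := fun hf hg hfg =>
    (isClosed_le hf hg).mem_of_frequently_of_tendsto hfg (tendsto_id.mono_left nhdsWithin_le_nhds)
  have hu : u = 0 := by simpa using hlimit (by fun_prop) (by fun_prop) h
  have hv : ∃ᶠ τ in 𝓝[>] (0 : ℝ), ‖v‖ ≤ C * τ :=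
    (h.and_eventually self_mem_nhdsWithin).mono fun τ ⟨hle, (hpos : 0 < τ)⟩ => by
      rw [hu, zero_sub, norm_neg, norm_smul, Real.norm_of_nonneg hpos.le] at hle
      exact le_of_mul_le_mul_left (hle.trans_eq (by ring)) hpos
  exact ⟨hu, by simpa using hlimit continuous_const (by fun_prop) hv⟩

/-- If `P₁` or `P₂` failed to annihilate `E`, the Taylor model would violate `Q k * E = E` for small
`ε * m`. -/
theorem IsTerminalScheme.exists_le_of_not_mul_proj_eq_zero (hPE : P * E = E)
    (hdeg : ¬(P₁ * E = 0 ∧ P₂ * E = 0)) (c : ℝ) :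
    ∃ δ : ℝ, 0 < δ ∧ ∀ {ε : ℝ} {m : ℕ} {Q X : ℕ → R}, 0 < ε * m →
      IsTerminalScheme E P P₁ P₂ c ε m Q X → δ ≤ ε * m := by
  have hrare : ∀ᶠ τ in 𝓝[>] (0 : ℝ),
      ¬‖P₁ * E - τ • ((1 / 2 : ℝ) • (P₂ * E))‖ ≤ c * ‖E‖ * τ ^ 2 := by
    refine not_frequently.1 fun hfreq => hdeg ?_
    simpa using eq_zero_of_frequently_norm_sub_smul_le hfreq
  obtain ⟨δ, hδ, hsub⟩ := mem_nhdsGT_iff_exists_Ioo_subset.1 hrare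
  exact ⟨δ, hδ, fun hτ h => not_lt.1 fun hlt =>
    hsub ⟨hτ, hlt⟩ (h.norm_mul_proj_sub_smul_le hPE hτ)⟩

theorem IsTerminalScheme.exists_norm_sub_terminalExpansion_le (hP : IsUniformlyErgodic P E)
    (hZ : IsFundamental P E Z) (P₁ P₂ : R) (c : ℝ) :
    ∃ C q : ℝ, 0 ≤ C ∧ 0 < q ∧ q < 1 ∧
      ∀ {ε : ℝ} {m : ℕ} {Q X : ℕ → R}, 0 < ε → ε ≤ 1 → 1 ≤ m →
        IsTerminalScheme E P P₁ P₂ c ε m Q X →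
        ‖X (m + 1) - terminalExpansion E P P₁ P₂ Z ε‖ ≤ C * (q ^ m + (ε * m) ^ 3) := by
  by_cases hdeg : P₁ * E = 0 ∧ P₂ * E = 0
  · obtain ⟨C, q, δ, hC, hq₀, hq₁, hδ, hsmall⟩ :=
      exists_norm_sub_terminalExpansion_le_of_mul_proj_eq_zero hP hZ hdeg.1 hdeg.2 c
    obtain ⟨B, hB, hlarge⟩ := exists_norm_sub_terminalExpansion_le_of_le hδ E P P₁ P₂ Z c
    refine ⟨C + B, q, by positivity, hq₀, hq₁, fun {ε m Q X} hε₀ hε₁ hm h => ?_⟩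
    rcases le_total (ε * m) δ with hτ | hτ
    · exact (hsmall hε₀ hm hτ h).trans (by gcongr; exact le_add_of_nonneg_right hB)
    · exact (hlarge hε₀ hε₁ hτ h).trans (mul_le_mul (le_add_of_nonneg_left hC)
        (le_add_of_nonneg_left (by positivity)) (by positivity) (by positivity))
  · obtain ⟨δ, hδ, hlower⟩ := exists_le_of_not_mul_proj_eq_zero hP.mul_proj hdeg c
    obtain ⟨B, hB, hlarge⟩ := exists_norm_sub_terminalExpansion_le_of_le hδ E P P₁ P₂ Z c
    refine ⟨B, 1 / 2, hB, by norm_num, by norm_num, fun {ε m Q X} hε₀ hε₁ hm h => ?_⟩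
    have hτ : 0 < ε * m := mul_pos hε₀ (by exact_mod_cast hm)
    refine (hlarge hε₀ hε₁ (hlower hτ h) h).trans ?_
    gcongr
    exact le_add_of_nonneg_left (by positivity)

theorem eventually_mul_log_le {m : ℝ → ℕ}
    (hm : Tendsto (fun ε => (m ε : ℝ) / Real.log (1 / ε)) (𝓝[>] (0 : ℝ)) atTop) (K : ℝ) :
    ∀ᶠ ε in 𝓝[>] (0 : ℝ), K * Real.log (1 / ε) ≤ m ε := by
  filter_upwards [hm.eventually_ge_atTop K, Ioo_mem_nhdsGT one_pos] with ε hK hε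
  exact (le_div_iff₀ (Real.log_pos ((one_lt_div hε.1).2 hε.2))).1 hK

theorem eventually_one_le {m : ℝ → ℕ}
    (hm : Tendsto (fun ε => (m ε : ℝ) / Real.log (1 / ε)) (𝓝[>] (0 : ℝ)) atTop) :
    ∀ᶠ ε in 𝓝[>] (0 : ℝ), 1 ≤ m ε := by
  filter_upwards [eventually_mul_log_le hm 1, Ioo_mem_nhdsGT one_pos] with ε hlog hε
  rw [one_mul] at hlog
  exact_mod_cast (Real.log_pos ((one_lt_div hε.1).2 hε.2)).trans_le hlog

theorem eventually_pow_le_pow {m : ℝ → ℕ}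
    (hm : Tendsto (fun ε => (m ε : ℝ) / Real.log (1 / ε)) (𝓝[>] (0 : ℝ)) atTop) {q : ℝ}
    (hq₀ : 0 < q) (hq₁ : q < 1) (p : ℕ) : ∀ᶠ ε in 𝓝[>] (0 : ℝ), q ^ m ε ≤ ε ^ p := by
  filter_upwards [eventually_mul_log_le hm (p / -Real.log q), self_mem_nhdsWithin]
    with ε hlog (hε : 0 < ε)
  have hlogq : 0 < -Real.log q := neg_pos.2 (Real.log_neg hq₀ hq₁)
  rw [← Real.log_le_log_iff (by positivity) (by positivity), Real.log_pow, Real.log_pow]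
  rw [div_mul_eq_mul_div, div_le_iff₀ hlogq, one_div, Real.log_inv] at hlog
  linarith

theorem IsTerminalScheme.isBigO_sub_terminalExpansion (hP : IsUniformlyErgodic P E)
    (hZ : IsFundamental P E Z) {m : ℝ → ℕ} {Q X : ℝ → ℕ → R}
    (hm : Tendsto (fun ε => (m ε : ℝ) / Real.log (1 / ε)) (𝓝[>] (0 : ℝ)) atTop)
    (h : ∀ᶠ ε in 𝓝[>] (0 : ℝ), IsTerminalScheme E P P₁ P₂ c ε (m ε) (Q ε) (X ε)) :
    (fun ε => X ε (m ε + 1) - terminalExpansion E P P₁ P₂ Z ε)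
      =O[𝓝[>] 0] fun ε => (ε * m ε) ^ 3 := by
  obtain ⟨C, q, hC, hq₀, hq₁, hbound⟩ := exists_norm_sub_terminalExpansion_le hP hZ P₁ P₂ c
  refine IsBigO.of_bound (C * 2) ?_
  filter_upwards [h, eventually_one_le hm, eventually_pow_le_pow hm hq₀ hq₁ 3,
    Ioc_mem_nhdsGT one_pos] with ε hscheme hm₁ hpow ⟨hε₀, hε₁⟩
  have hm₁' : (1 : ℝ) ≤ m ε := by exact_mod_cast hm₁
  have hpow' : q ^ m ε ≤ (ε * m ε) ^ 3 :=
    hpow.trans (pow_le_pow_left₀ hε₀.le (le_mul_of_one_le_right hε₀.le hm₁') 3)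
  rw [Real.norm_of_nonneg (by positivity), mul_assoc, two_mul]
  exact (hbound hε₀ hε₁ hm₁ hscheme).trans (by gcongr)

end TerminalScheme

section FundamentalElement

variable {R : Type*} [NormedRing R] {P E Z : R}

theorem mul_pow_eq_left {M : Type*} [Monoid M] {a b : M} (h : a * b = a) (k : ℕ) :
    a * b ^ k = a := by
  induction k with
  | zero => rw [pow_zero, mul_one]
  | succ k ih => rw [pow_succ, ← mul_assoc, ih, h]

theorem IsUniformlyErgodic.sub_proj_pow (h : IsUniformlyErgodic P E) {N : ℕ} (hN : N ≠ 0) :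
    (P - E) ^ N = P ^ N - E := by
  obtain ⟨k, rfl⟩ := Nat.exists_eq_add_one_of_ne_zero hN
  clear hN
  induction k with
  | zero => rw [zero_add, pow_one, pow_one]
  | succ k ih =>
    rw [pow_succ', ih, sub_mul, mul_sub, mul_sub, mul_pow_eq_left h.proj_mul, h.mul_proj,
      h.proj_mul_proj, sub_self, sub_zero, ← pow_succ']

theorem IsUniformlyErgodic.isUnit_one_sub_add [HasSummableGeomSeries R]
    (h : IsUniformlyErgodic P E) : IsUnit (1 - P + E) := by
  obtain ⟨N, hN, hρ⟩ := h.exists_norm_pow_sub_lt_one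
  rw [← h.sub_proj_pow hN] at hρ
  have hcomm : Commute (1 - (P - E)) (∑ i ∈ Finset.range N, (P - E) ^ i) :=
    (mul_neg_geom_sum _ _).trans (geom_sum_mul_neg _ _).symm
  have hprod : IsUnit ((1 - (P - E)) * ∑ i ∈ Finset.range N, (P - E) ^ i) := by
    rw [mul_neg_geom_sum]
    exact isUnit_one_sub_of_norm_lt_one hρ
  simpa only [sub_add] using (hcomm.isUnit_mul_iff.1 hprod).1

theorem IsUniformlyErgodic.isFundamental (h : IsUniformlyErgodic P E)
    (hZ : Z * (1 - P + E) = 1) : IsFundamental P E Z := by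
  have hZE : Z * E = E := by
    have hfix : (1 - P + E) * E = E := by
      rw [add_mul, sub_mul, one_mul, h.mul_proj, h.proj_mul_proj, sub_self, zero_add]
    rw [← hfix, ← mul_assoc, hZ, one_mul, hfix]
  exact ⟨h.proj_mul, hZE, by rw [← add_sub_cancel_right (1 - P) E, mul_sub, hZ, hZE]⟩

end FundamentalElement

section Stochastic

variable {S : Type*} [Fintype S]

theorem matNorm_eq_norm (A : Matrix S S ℝ) : matNorm A = ‖A‖ := by
  simp only [matNorm, linfty_opNorm_def, Finset.sup_univ_eq_ciSup, NNReal.coe_iSup, NNReal.coe_sum,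
    coe_nnnorm, Real.norm_eq_abs]

theorem norm_le_of_row_sum_le [Nonempty S] {A : Matrix S S ℝ} {c : ℝ} (hA : ∀ x y, 0 ≤ A x y)
    (hsum : ∀ x, ∑ y, A x y ≤ c) : ‖A‖ ≤ c := by
  rw [← matNorm_eq_norm]
  refine ciSup_le fun x => (Finset.sum_congr rfl fun y _ => ?_).trans_le (hsum x)
  exact abs_of_nonneg (hA x y)

theorem mul_replicateRow (A : Matrix S S ℝ) (ν : S → ℝ) :
    A * replicateRow S ν = vecMulVec (A *ᵥ 1) ν := by
  rw [← one_vecMulVec, mul_vecMulVec]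

variable [DecidableEq S]

theorem isStochastic_iff_mem_rowStochastic {A : Matrix S S ℝ} :
    IsStochastic A ↔ A ∈ rowStochastic ℝ S :=
  mem_rowStochastic_iff_sum.symm

theorem norm_mul_le_of_le_column [Nonempty S] {A Q : Matrix S S ℝ} {d : ℝ} {y : S} (hA : A *ᵥ 1 = 0)
    (hQ : Q ∈ rowStochastic ℝ S) (hd : ∀ x, d ≤ Q x y) : ‖A * Q‖ ≤ (1 - d) * ‖A‖ := by
  have hrest : ‖Q - replicateRow S (Pi.single y d)‖ ≤ 1 - d := by
    refine norm_le_of_row_sum_le (fun x z => ?_) fun x => ?_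
    · rcases eq_or_ne z y with rfl | hz
      · simpa using hd x
      · simpa [hz] using hQ.1 x z
    · simp [Finset.sum_sub_distrib, sum_row_of_mem_rowStochastic hQ]
  have hkill : A * replicateRow S (Pi.single y d) = 0 := by
    rw [mul_replicateRow, hA, zero_vecMulVec]
  calc ‖A * Q‖ = ‖A * (Q - replicateRow S (Pi.single y d))‖ := by rw [mul_sub, hkill, sub_zero]
    _ ≤ ‖A‖ * (1 - d) := (norm_mul_le _ _).trans (by gcongr)
    _ = (1 - d) * ‖A‖ := mul_comm _ _

theorem mem_contractionsFixing_replicateRow [Nonempty S] {Q : Matrix S S ℝ}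
    (hQ : Q ∈ rowStochastic ℝ S) (ν : S → ℝ) : Q ∈ contractionsFixing (replicateRow S ν) :=
  ⟨norm_le_of_row_sum_le hQ.1 fun x => (sum_row_of_mem_rowStochastic hQ x).le, by
    rw [mul_replicateRow, hQ.2, one_vecMulVec]⟩

theorem exists_norm_mul_pow_lt_one [Nonempty S] {A Q : Matrix S S ℝ} {y : S} (hA : A *ᵥ 1 = 0)
    (hQ : Q ∈ rowStochastic ℝ S) (hy : ∀ x, 0 < Q x y) : ∃ j, ‖A * Q ^ j‖ < 1 := by
  obtain ⟨x₀, hx₀⟩ := Finite.exists_min fun x => Q x y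
  have hdecay : ∀ j, ‖A * Q ^ j‖ ≤ (1 - Q x₀ y) ^ j * ‖A‖ := by
    intro j
    induction j with
    | zero => simp
    | succ j ih =>
      have hAj : (A * Q ^ j) *ᵥ 1 = 0 := by
        rw [← mulVec_mulVec, (pow_mem hQ j).2, hA]
      rw [pow_succ, ← mul_assoc, pow_succ', mul_assoc (1 - Q x₀ y)]
      exact (norm_mul_le_of_le_column hAj hQ hx₀).trans
        (mul_le_mul_of_nonneg_left ih (sub_nonneg.2 (le_one_of_mem_rowStochastic hQ)))
  have hlim : Tendsto (fun j => (1 - Q x₀ y) ^ j * ‖A‖) atTop (𝓝 0) := by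
    simpa using (tendsto_pow_atTop_nhds_zero_of_lt_one
      (sub_nonneg.2 (le_one_of_mem_rowStochastic hQ)) (sub_lt_self 1 (hy x₀))).mul_const ‖A‖
  obtain ⟨j, hj⟩ := (hlim.eventually_lt_const one_pos).exists
  exact ⟨j, (hdecay j).trans_lt hj⟩

/-- Doeblin's criterion: some power has a strictly positive column. -/
theorem isUniformlyErgodic_replicateRow [Nonempty S] {P : Matrix S S ℝ} {π : S → ℝ} {N : ℕ} {y : S}
    (hP : P ∈ rowStochastic ℝ S) (hπ : ∑ x, π x = 1) (hπP : π ᵥ* P = π)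
    (hy : ∀ x, 0 < (P ^ N) x y) : IsUniformlyErgodic P (replicateRow S π) := by
  have hE : replicateRow S π *ᵥ 1 = 1 := by
    ext x
    simp [mulVec, dotProduct, hπ]
  have hEP : replicateRow S π * P = replicateRow S π := by
    rw [← replicateRow_vecMul, hπP]
  have hPE : ∀ {Q}, Q ∈ rowStochastic ℝ S → Q * replicateRow S π = replicateRow S π := fun hQ =>
    (mem_contractionsFixing_replicateRow hQ π).2
  refine ⟨hEP, hPE hP, by rw [mul_replicateRow, hE, one_vecMulVec], ?_⟩
  obtain ⟨j, hj⟩ := exists_norm_mul_pow_lt_one (A := 1 - replicateRow S π)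
    (by rw [sub_mulVec, one_mulVec, hE, sub_self]) (pow_mem hP N) hy
  have hfactor : P ^ (N * j + 1) - replicateRow S π
      = (1 - replicateRow S π) * (P ^ N) ^ j * P := by
    rw [← pow_mul, mul_assoc, ← pow_succ, sub_mul, one_mul, mul_pow_eq_left hEP]
  refine ⟨N * j + 1, Nat.succ_ne_zero _, ?_⟩
  rw [hfactor]
  exact (norm_mul_le _ _).trans_lt (mul_lt_one_of_nonneg_of_lt_one_left (norm_nonneg _) hj
    (mem_contractionsFixing_replicateRow hP π).1)

end Stochastic

section TransientExpectation

variable {S : Type*} [Fintype S]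

/-- The functional `A ↦ μ A r`: the expectation of `r` after a transition by `A` from `μ`. -/
def transientExpectation (μ r : S → ℝ) : Matrix S S ℝ →ₗ[ℝ] ℝ where
  toFun A := μ ⬝ᵥ (A *ᵥ r)
  map_add' A B := by rw [add_mulVec, dotProduct_add]
  map_smul' t A := by rw [smul_mulVec, dotProduct_smul, RingHom.id_apply]

theorem transientExpectation_replicateRow_mul {μ π : S → ℝ} (hμ : ∑ x, μ x = 1) (r : S → ℝ)
    (A : Matrix S S ℝ) :
    transientExpectation μ r (replicateRow S π * A) = π ⬝ᵥ (A *ᵥ r) := by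
  have hμE : μ ᵥ* replicateRow S π = π := by
    rw [← one_vecMulVec, vecMul_vecMulVec, dotProduct_one, hμ, one_smul]
  change μ ⬝ᵥ ((replicateRow S π * A) *ᵥ r) = _
  rw [← mulVec_mulVec, dotProduct_mulVec, hμE]

theorem isBigO_transientExpectation {α : Type*} (μ r : S → ℝ) (f : α → Matrix S S ℝ)
    (l : Filter α) : (fun a => transientExpectation μ r (f a)) =O[l] f := by
  refine IsBigO.of_bound ((∑ x, |μ x|) * ‖r‖) (.of_forall fun a => ?_)
  calc |transientExpectation μ r (f a)| ≤ ∑ x, |μ x| * |(f a *ᵥ r) x| :=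
        (Finset.abs_sum_le_sum_abs _ _).trans_eq (by simp only [abs_mul])
    _ ≤ ∑ x, |μ x| * (‖f a‖ * ‖r‖) := by
        gcongr with x
        exact (norm_le_pi_norm (f a *ᵥ r) x).trans (linfty_opNorm_mulVec (f a) r)
    _ = (∑ x, |μ x|) * ‖r‖ * ‖f a‖ := by rw [← Finset.sum_mul]; ring

variable [DecidableEq S]

theorem prodP_succ (P : ℕ → Matrix S S ℝ) (j : ℕ) : prodP P (j + 1) = prodP P j * P (j + 1) := by
  simp only [prodP, List.range_succ, List.map_append, List.prod_append, List.map_singleton,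
    List.prod_singleton]

theorem prodP_mem_rowStochastic {P : ℕ → Matrix S S ℝ} {j : ℕ}
    (hP : ∀ k, 1 ≤ k → k ≤ j → IsStochastic (P k)) : prodP P j ∈ rowStochastic ℝ S := by
  refine list_prod_mem fun A hA => ?_
  obtain ⟨i, hi, rfl⟩ := List.mem_map.1 hA
  exact isStochastic_iff_mem_rowStochastic.1 (hP _ i.succ_pos (List.mem_range.1 hi))

theorem isTerminalScheme_prodP [Nonempty S] {P : ℕ → Matrix S S ℝ} {Pt Pt1 Pt2 : Matrix S S ℝ}
    {c ε : ℝ} {m n : ℕ} (hmn : m < n) (hP : ∀ k, 1 ≤ k → k ≤ n → IsStochastic (P k))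
    (happrox : ∀ k ≤ m, ‖P (n - k) - taylorTwo Pt Pt1 Pt2 (ε * k)‖ ≤ c * (ε * m) ^ 3)
    (π : S → ℝ) :
    IsTerminalScheme (replicateRow S π) Pt Pt1 Pt2 c ε m (fun k => P (n - k))
      (fun j => prodP P (n - (m + 1) + j)) where
  start_mem := mem_contractionsFixing_replicateRow
    (prodP_mem_rowStochastic fun k hk hkn => hP k hk (by lia)) π
  mem k hk := mem_contractionsFixing_replicateRow
    (isStochastic_iff_mem_rowStochastic.1 (hP _ (by lia) (by lia))) π
  norm_sub_taylorTwo_le := happrox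
  step j hj := by
    rw [← add_assoc, prodP_succ]
    congr 2
    lia

/-- The fundamental matrix `Z = (I - P + Π)⁻¹` of a chain with stationary row vector `π`. -/
noncomputable def fundamentalMatrix (P : Matrix S S ℝ) (π : S → ℝ) : Matrix S S ℝ :=
  (1 - P + replicateRow S π)⁻¹

theorem isFundamental_fundamentalMatrix [Nonempty S] {P : Matrix S S ℝ} {π : S → ℝ}
    (hP : IsUniformlyErgodic P (replicateRow S π)) :
    IsFundamental P (replicateRow S π) (fundamentalMatrix P π) := by
  have : CompleteSpace (Matrix S S ℝ) := FiniteDimensional.complete ℝ _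
  exact hP.isFundamental (nonsing_inv_mul _ ((isUnit_iff_isUnit_det _).1 hP.isUnit_one_sub_add))

theorem transientExpectation_terminalExpansion {μ π : S → ℝ} {Pt : Matrix S S ℝ}
    (hμ : ∑ x, μ x = 1) (hπ : π ᵥ* Pt = π) (Pt1 Pt2 Z : Matrix S S ℝ) (r : S → ℝ) (ε : ℝ) :
    transientExpectation μ r (terminalExpansion (replicateRow S π) Pt Pt1 Pt2 Z ε)
      = π ⬝ᵥ r - ε * (π ⬝ᵥ ((Pt1 * Z ^ 2 * Pt) *ᵥ r))
        + ε ^ 2 * (π ⬝ᵥ ((Pt1 * Z ^ 2 * Pt1 * Z ^ 2 * Pt) *ᵥ r))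
        + ε ^ 2 * (((1 / 2 : ℝ) • (π ᵥ* Pt2) + π ᵥ* (Pt1 * Z * Pt1)) ⬝ᵥ
            ((((2 : ℝ) • Z ^ 3 - Z ^ 2) * Pt) *ᵥ r)) := by
  rw [terminalExpansion_eq_proj_mul (by rw [← replicateRow_vecMul, hπ]),
    transientExpectation_replicateRow_mul hμ]
  have hPr : π ⬝ᵥ (Pt *ᵥ r) = π ⬝ᵥ r := by rw [dotProduct_mulVec, hπ]
  have hsource : (1 / 2 : ℝ) • (π ᵥ* Pt2) + π ᵥ* (Pt1 * Z * Pt1)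
      = π ᵥ* ((1 / 2 : ℝ) • Pt2 + Pt1 * Z * Pt1) := by
    rw [vecMul_add, vecMul_smul]
  rw [hsource, ← dotProduct_mulVec, mulVec_mulVec]
  simp only [add_mulVec, sub_mulVec, smul_mulVec, dotProduct_add, dotProduct_sub, dotProduct_smul,
    smul_eq_mul, hPr]

end TransientExpectation

theorem eventually_nhdsGT_zero_iff {p : ℝ → Prop} :
    (∀ᶠ ε in 𝓝[>] 0, p ε) ↔ ∃ ε₁ > 0, ∀ ε, 0 < ε → ε < ε₁ → p ε := by
  refine mem_nhdsGT_iff_exists_Ioo_subset.trans (exists_congr fun ε₁ => and_congr_right fun _ => ?_)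
  exact ⟨fun h ε h₀ h₁ => h ⟨h₀, h₁⟩, fun h ε hε => h ε hε.1 hε.2⟩

theorem tendsto_mcut_div_log {n : ℝ → ℕ} {a : ℝ → ℝ}
    (hn : Tendsto (fun ε => (n ε : ℝ) / Real.log (1 / ε)) (𝓝[>] (0 : ℝ)) atTop)
    (ha : Tendsto a (𝓝[>] (0 : ℝ)) atTop) :
    Tendsto (fun ε => (mcut n a ε : ℝ) / Real.log (1 / ε)) (𝓝[>] (0 : ℝ)) atTop := by
  refine tendsto_atTop.2 fun K => ?_
  filter_upwards [eventually_mul_log_le hn (2 * (K + 1)), ha.eventually_ge_atTop (K + 1),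
    Ioo_mem_nhdsGT (Real.exp_pos (-1))] with ε hnε haε hε
  have hlog : 1 ≤ Real.log (1 / ε) := by
    rw [one_div, Real.log_inv, le_neg]
    exact (Real.log_le_iff_le_exp hε.1).2 hε.2.le
  have hmin : (K + 1) * Real.log (1 / ε) ≤ min ((n ε : ℝ) / 2) (a ε * Real.log (1 / ε)) :=
    le_min (by linarith) (by gcongr)
  rw [le_div_iff₀ (by linarith)]
  linarith [Nat.lt_floor_add_one (min ((n ε : ℝ) / 2) (a ε * Real.log (1 / ε))),
    show (mcut n a ε : ℝ) = ⌊min ((n ε : ℝ) / 2) (a ε * Real.log (1 / ε))⌋₊ from rfl]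

theorem mcut_lt {n : ℝ → ℕ} {ε : ℝ} (hn : 1 ≤ n ε) (a : ℝ → ℝ) : mcut n a ε < n ε := by
  refine (Nat.floor_lt' (Nat.one_le_iff_ne_zero.1 hn)).2 ((min_le_left _ _).trans_lt ?_)
  exact half_lt_self (by exact_mod_cast hn)

theorem exists_bound_of_isBigO {f : ℝ → ℝ} {m : ℝ → ℕ}
    (hf : f =O[𝓝[>] 0] fun ε => ε ^ 3 * (m ε : ℝ) ^ 3) :
    ∃ c > (0 : ℝ), ∃ ε₂ > (0 : ℝ), ∀ ε : ℝ, 0 < ε → ε < ε₂ → |f ε| ≤ c * ε ^ 3 * (m ε : ℝ) ^ 4 := by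
  obtain ⟨c, hc, hbound⟩ := hf.exists_pos
  refine ⟨c, hc, eventually_nhdsGT_zero_iff.1 ?_⟩
  filter_upwards [hbound.bound, self_mem_nhdsWithin] with ε hle (hε : 0 < ε)
  have hpow : (m ε : ℝ) ^ 3 ≤ (m ε : ℝ) ^ 4 := by
    rcases (m ε).eq_zero_or_pos with hm | hm
    · simp [hm]
    · exact_mod_cast Nat.pow_le_pow_right hm (Nat.le_succ 3)
  rw [Real.norm_eq_abs, Real.norm_of_nonneg (by positivity)] at hle
  exact hle.trans (by rw [mul_assoc]; gcongr)

theorem transient_expectation_terminal_expansion_second_order_general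
    {S : Type*} [Fintype S] [DecidableEq S] {n m : ℝ → ℕ}
    (hm : Tendsto (fun ε => (m ε : ℝ) / Real.log (1 / ε)) (𝓝[>] (0 : ℝ)) atTop)
    (hmn : ∀ᶠ ε in 𝓝[>] (0 : ℝ), m ε < n ε)
    {P : ℕ → ℝ → Matrix S S ℝ} {Pt Pt1 Pt2 : Matrix S S ℝ}
    (hstoch : ∀ᶠ ε in 𝓝[>] (0 : ℝ), ∀ k, 1 ≤ k → k ≤ n ε → IsStochastic (P k ε))
    (hPt : IsStochastic Pt) (hcolumn : ∃ N y, ∀ x, 0 < (Pt ^ N) x y)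
    {π : S → ℝ} (hπ1 : ∑ x, π x = 1) (hπP : π ᵥ* Pt = π) {c : ℝ}
    (happrox : ∀ᶠ ε in 𝓝[>] (0 : ℝ), ∀ k ≤ m ε,
      matNorm (P (n ε - k) ε - (Pt - (ε * k) • Pt1 + (ε ^ 2 / 2 * (k : ℝ) ^ 2) • Pt2))
        ≤ c * ε ^ 3 * (m ε : ℝ) ^ 3)
    {μ : S → ℝ} (hμ1 : ∑ x, μ x = 1) (r : S → ℝ) :
    (fun ε => μ ⬝ᵥ (prodP (fun k => P k ε) (n ε) *ᵥ r) -
      (π ⬝ᵥ r - ε * (π ⬝ᵥ ((Pt1 * fundamentalMatrix Pt π ^ 2 * Pt) *ᵥ r)) +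
        ε ^ 2 * (π ⬝ᵥ ((Pt1 * fundamentalMatrix Pt π ^ 2 * Pt1 * fundamentalMatrix Pt π ^ 2 * Pt)
          *ᵥ r)) +
        ε ^ 2 * (((1 / 2 : ℝ) • (π ᵥ* Pt2) + π ᵥ* (Pt1 * fundamentalMatrix Pt π * Pt1)) ⬝ᵥ
          ((((2 : ℝ) • fundamentalMatrix Pt π ^ 3 - fundamentalMatrix Pt π ^ 2) * Pt) *ᵥ r))))
      =O[𝓝[>] 0] fun ε => ε ^ 3 * (m ε : ℝ) ^ 3 := by
  obtain ⟨N, y, hy⟩ := hcolumn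
  have : Nonempty S := ⟨y⟩
  have hergodic :=
    isUniformlyErgodic_replicateRow (isStochastic_iff_mem_rowStochastic.1 hPt) hπ1 hπP hy
  have hscheme : ∀ᶠ ε in 𝓝[>] (0 : ℝ), IsTerminalScheme (replicateRow S π) Pt Pt1 Pt2 c ε (m ε)
      (fun k => P (n ε - k) ε) (fun j => prodP (fun k => P k ε) (n ε - (m ε + 1) + j)) := by
    filter_upwards [hmn, hstoch, happrox] with ε hmnε hstochε happroxε
    refine isTerminalScheme_prodP hmnε hstochε (fun k hk => ?_) π
    rw [← matNorm_eq_norm, mul_pow, ← mul_assoc]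
    convert happroxε k hk using 2
    rw [taylorTwo, mul_pow, mul_div_right_comm]
  have herror := IsTerminalScheme.isBigO_sub_terminalExpansion hergodic
    (isFundamental_fundamentalMatrix hergodic) hm hscheme
  refine ((isBigO_transientExpectation μ r _ _).trans herror).congr' ?_
    (.of_forall fun ε => mul_pow _ _ 3)
  filter_upwards [hmn] with ε hmnε
  rw [map_sub, transientExpectation_terminalExpansion hμ1 hπP, Nat.sub_add_cancel hmnε]
  rfl

/-- Theorem 6: second-order approximation of μ P₁(ε)⋯P_{n(ε)}(ε) r for long horizons,
expanding around the final transition matrix P̃, with error O(ε³ m(ε)⁴) as ε ↓ 0,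
where Z = (I − P̃ + Π̃)⁻¹. -/
theorem transient_expectation_terminal_expansion_second_order
    {S : Type*} [Fintype S] [Nonempty S] [DecidableEq S]
    (ε₀ : ℝ) (hε₀ : 0 < ε₀) (n : ℝ → ℕ) (a : ℝ → ℝ)
    (hn : Tendsto (fun ε => (n ε : ℝ) / Real.log (1/ε)) (𝓝[>] (0:ℝ)) atTop)
    (ha0 : ∀ ε : ℝ, 0 < ε → ε < ε₀ → 0 < a ε)
    (ha : Tendsto a (𝓝[>] (0:ℝ)) atTop)
    (P : ℕ → ℝ → Matrix S S ℝ) (Pt Pt1 Pt2 : Matrix S S ℝ)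
    (hstoch : ∀ ε : ℝ, 0 < ε → ε < ε₀ → ∀ k : ℕ, 1 ≤ k → k ≤ n ε → IsStochastic (P k ε))
    (hPt : IsStochastic Pt)
    (hirr : ∃ N : ℕ, ∀ x y, 0 < (Pt ^ N) x y)
    (π : S → ℝ) (hπ0 : ∀ x, 0 ≤ π x) (hπ1 : ∑ x, π x = 1) (hπP : π ᵥ* Pt = π)
    (happrox : ∃ c > (0:ℝ), ∃ ε₁ > (0:ℝ), ∀ ε : ℝ, 0 < ε → ε < ε₁ →
      ∀ k : ℕ, k ≤ mcut n a ε →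
        matNorm (P (n ε - k) ε - (Pt - (ε * k) • Pt1 + (ε ^ 2 / 2 * (k : ℝ) ^ 2) • Pt2))
          ≤ c * ε ^ 3 * (mcut n a ε : ℝ) ^ 3) :
    ∀ μ r : S → ℝ, (∀ x, 0 ≤ μ x) → (∑ x, μ x = 1) →
      ∃ c > (0:ℝ), ∃ ε₂ > (0:ℝ), ∀ ε : ℝ, 0 < ε → ε < ε₂ →
        |μ ⬝ᵥ (prodP (fun k => P k ε) (n ε) *ᵥ r) -
            (π ⬝ᵥ r -
              ε * (π ⬝ᵥ ((Pt1 * ((1 - Pt + Matrix.of fun _ y => π y)⁻¹) ^ 2 * Pt) *ᵥ r)) +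
              ε ^ 2 * (π ⬝ᵥ ((Pt1 * ((1 - Pt + Matrix.of fun _ y => π y)⁻¹) ^ 2 * Pt1 *
                  ((1 - Pt + Matrix.of fun _ y => π y)⁻¹) ^ 2 * Pt) *ᵥ r)) +
              ε ^ 2 * (((1/2 : ℝ) • (π ᵥ* Pt2) +
                  π ᵥ* (Pt1 * (1 - Pt + Matrix.of fun _ y => π y)⁻¹ * Pt1)) ⬝ᵥ
                  ((((2:ℝ) • ((1 - Pt + Matrix.of fun _ y => π y)⁻¹) ^ 3 -
                    ((1 - Pt + Matrix.of fun _ y => π y)⁻¹) ^ 2) * Pt) *ᵥ r)))|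
          ≤ c * ε ^ 3 * (mcut n a ε : ℝ) ^ 4 := by
  intro μ r _ hμ1
  obtain ⟨c, _, ε₁, hε₁, happrox⟩ := happrox
  have hcolumn : ∃ N y, ∀ x, 0 < (Pt ^ N) x y :=
    hirr.imp fun _ hN => ⟨Classical.arbitrary S, fun x => hN x _⟩
  exact exists_bound_of_isBigO (transient_expectation_terminal_expansion_second_order_general
    (tendsto_mcut_div_log hn ha) ((eventually_one_le hn).mono fun ε h => mcut_lt h a)
    (eventually_nhdsGT_zero_iff.2 ⟨ε₀, hε₀, hstoch⟩) hPt hcolumn hπ1 hπP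
    (eventually_nhdsGT_zero_iff.2 ⟨ε₁, hε₁, happrox⟩) hμ1 r)
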